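/- Tensor products of dual feasible solutions for the bipartite conditional min-entropy SDP are feasible: suppose M₁ indexed by A₀ × B₀ × B₁ is positive semidefinite, N₁ indexed by B₀ is Hermitian with trace 1 and Tr_{A₀} M₁ ≤ N₁ ⊗ I_{B₁}, and similarly M₂ indexed by A₀' × B₀' × B₁' is positive semidefinite, N₂ indexed by B₀' is Hermitian with trace 1 and Tr_{A₀'} M₂ ≤ N₂ ⊗ I_{B₁'}. Then M₁ ⊠ M₂ is positive semidefinite, N₁ ⊗ N₂ is Hermitian with trace 1, and Tr_{A₀ × A₀'} (M₁ ⊠ M₂) ≤ (N₁ ⊗ N₂) ⊗ I_{B₁ × B₁'} (with the natural reindexings). That is, the product of dual feasible solutions of the SDPs for H_min(𝐀|𝐁) of two channels is dual feasible for the SDP of their tensor product. -/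

import Mathlib

open Matrix
open scoped ComplexOrder

noncomputable section

/-- Loewner order on complex matrices: `M ≤ N` iff `N - M` is positive semidefinite. -/
def LoewnerLE {n : Type*} [Fintype n] (M N : Matrix n n ℂ) : Prop := (N - M).PosSemidef

/-- `π_S ⊗ X`, the maximally mixed state on `S` tensored with `X`. -/
def piFst {S T : Type*} [Fintype S] [DecidableEq S] (X : Matrix T T ℂ) :
    Matrix (S × T) (S × T) ℂ :=
  fun x y => ((Fintype.card S : ℂ))⁻¹ * (if x.1 = y.1 then 1 else 0) * X x.2 y.2

/-- `I_S ⊗ X`, the identity on `S` tensored with `X`. -/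
def idFst {S T : Type*} [DecidableEq S] (X : Matrix T T ℂ) :
    Matrix (S × T) (S × T) ℂ :=
  fun x y => (if x.1 = y.1 then 1 else 0) * X x.2 y.2

/-- Partial trace over the second tensor factor. -/
def trOut {S T : Type*} [Fintype T] (X : Matrix (S × T) (S × T) ℂ) : Matrix S S ℂ :=
  fun s s' => ∑ t : T, X (s, t) (s', t)

/-- Partial trace over the first tensor factor. -/
def trInp {S T : Type*} [Fintype S] (X : Matrix (S × T) (S × T) ℂ) : Matrix T T ℂ :=
  fun t t' => ∑ s : S, X (s, t) (s, t')

section FourSystems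

variable {A₀ A₁ B₀ B₁ : Type*} [Fintype A₀] [Fintype A₁] [Fintype B₀] [Fintype B₁]
  [DecidableEq A₀] [DecidableEq A₁] [DecidableEq B₀] [DecidableEq B₁]

/-- `Tr_{A₁}` of a matrix on `A₀ × A₁ × B₀ × B₁`. -/
def trA1 (J : Matrix (A₀ × A₁ × B₀ × B₁) (A₀ × A₁ × B₀ × B₁) ℂ) :
    Matrix (A₀ × B₀ × B₁) (A₀ × B₀ × B₁) ℂ :=
  fun x y => ∑ a : A₁, J (x.1, a, x.2) (y.1, a, y.2)

/-- `Tr_{B₁}` of a matrix on `A₀ × A₁ × B₀ × B₁`. -/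
def trB1 (J : Matrix (A₀ × A₁ × B₀ × B₁) (A₀ × A₁ × B₀ × B₁) ℂ) :
    Matrix (A₀ × A₁ × B₀) (A₀ × A₁ × B₀) ℂ :=
  fun x y => ∑ b : B₁, J (x.1, x.2.1, x.2.2, b) (y.1, y.2.1, y.2.2, b)

/-- `Tr_{A₀A₁}` of a matrix on `A₀ × A₁ × B₀ × B₁`. -/
def trA0A1 (J : Matrix (A₀ × A₁ × B₀ × B₁) (A₀ × A₁ × B₀ × B₁) ℂ) :
    Matrix (B₀ × B₁) (B₀ × B₁) ℂ :=
  fun x y => ∑ a₀ : A₀, ∑ a₁ : A₁, J (a₀, a₁, x) (a₀, a₁, y)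

/-- `Tr_{B₀B₁}` of a matrix on `A₀ × A₁ × B₀ × B₁`. -/
def trB0B1 (J : Matrix (A₀ × A₁ × B₀ × B₁) (A₀ × A₁ × B₀ × B₁) ℂ) :
    Matrix (A₀ × A₁) (A₀ × A₁) ℂ :=
  fun x y => ∑ b₀ : B₀, ∑ b₁ : B₁, J (x.1, x.2, b₀, b₁) (y.1, y.2, b₀, b₁)

/-- `Tr_{A₁B₁}` of a matrix on `A₀ × A₁ × B₀ × B₁`. -/
def trA1B1 (J : Matrix (A₀ × A₁ × B₀ × B₁) (A₀ × A₁ × B₀ × B₁) ℂ) :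
    Matrix (A₀ × B₀) (A₀ × B₀) ℂ :=
  fun x y => ∑ a₁ : A₁, ∑ b₁ : B₁, J (x.1, a₁, x.2, b₁) (y.1, a₁, y.2, b₁)

/-- `π_{B₀} ⊗ Y`, reindexed to `A₀ × A₁ × B₀` with the subsystems in this order. -/
def piB0 (Y : Matrix (A₀ × A₁) (A₀ × A₁) ℂ) :
    Matrix (A₀ × A₁ × B₀) (A₀ × A₁ × B₀) ℂ :=
  fun x y => ((Fintype.card B₀ : ℂ))⁻¹ * (if x.2.2 = y.2.2 then 1 else 0) *
    Y (x.1, x.2.1) (y.1, y.2.1)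

/-- The non-signalling conditions for a Choi matrix on `A₀ × A₁ × B₀ × B₁`:
`Tr_{A₁} J = π_{A₀} ⊗ Tr_{A₀A₁} J` and `Tr_{B₁} J = π_{B₀} ⊗ Tr_{B₀B₁} J`. -/
def NS (J : Matrix (A₀ × A₁ × B₀ × B₁) (A₀ × A₁ × B₀ × B₁) ℂ) : Prop :=
  trA1 J = piFst (trA0A1 J) ∧ trB1 J = piB0 (trB0B1 J)

/-- The optimal value `Λ(J)` of the SDP whose logarithm is the max-relative entropy of
bidirectional classical communication of the bipartite channel with Choi matrix `J`. -/
def Lam (J : Matrix (A₀ × A₁ × B₀ × B₁) (A₀ × A₁ × B₀ × B₁) ℂ) : ℝ :=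
  sInf {l : ℝ | ∃ Y : Matrix (A₀ × A₁ × B₀ × B₁) (A₀ × A₁ × B₀ × B₁) ℂ,
    LoewnerLE J Y ∧ trA1B1 Y = l • (1 : Matrix (A₀ × B₀) (A₀ × B₀) ℂ) ∧ NS Y}

end FourSystems

/-- The optimal value `μ(K)` of the SDP whose negative logarithm is the bipartite
conditional min-entropy `H_min(𝐀|𝐁)` (for `K = Tr_{A₁} J` of a channel Choi matrix `J`). -/
def mu {A₀ B₀ B₁ : Type*} [Fintype A₀] [Fintype B₀] [Fintype B₁]
    [DecidableEq A₀] [DecidableEq B₀]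
    (K : Matrix (A₀ × B₀ × B₁) (A₀ × B₀ × B₁) ℂ) : ℝ :=
  sInf {m : ℝ | ∃ X : Matrix (B₀ × B₁) (B₀ × B₁) ℂ,
    trOut X = m • (1 : Matrix B₀ B₀ ℂ) ∧ LoewnerLE K (idFst X)}

/-- `Tr_{B₁}` of a matrix on `A₀ × B₀ × B₁`. -/
def trLast3 {A₀ B₀ B₁ : Type*} [Fintype B₁]
    (K : Matrix (A₀ × B₀ × B₁) (A₀ × B₀ × B₁) ℂ) : Matrix (A₀ × B₀) (A₀ × B₀) ℂ :=
  fun x y => ∑ b : B₁, K (x.1, x.2, b) (y.1, y.2, b)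

/-- Kronecker product of matrices on three-fold systems, reindexed to
`(A₀ × A₀') × (B₀ × B₀') × (B₁ × B₁')`. -/
def kron3 {A₀ B₀ B₁ A₀' B₀' B₁' : Type*}
    (K₁ : Matrix (A₀ × B₀ × B₁) (A₀ × B₀ × B₁) ℂ)
    (K₂ : Matrix (A₀' × B₀' × B₁') (A₀' × B₀' × B₁') ℂ) :
    Matrix ((A₀ × A₀') × (B₀ × B₀') × (B₁ × B₁'))
      ((A₀ × A₀') × (B₀ × B₀') × (B₁ × B₁')) ℂ :=
  fun x y =>
    K₁ (x.1.1, x.2.1.1, x.2.2.1) (y.1.1, y.2.1.1, y.2.2.1) *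
    K₂ (x.1.2, x.2.1.2, x.2.2.2) (y.1.2, y.2.1.2, y.2.2.2)

/-- `N ⊗ I_T` reindexed to `S × T`. -/
def tensIdSnd {S T : Type*} [DecidableEq T] (N : Matrix S S ℂ) :
    Matrix (S × T) (S × T) ℂ :=
  fun u v => N u.1 v.1 * (if u.2 = v.2 then 1 else 0)

/-- Kronecker product of two plain matrices. -/
def kronPlain {S S' : Type*} (N₁ : Matrix S S ℂ) (N₂ : Matrix S' S' ℂ) :
    Matrix (S × S') (S × S') ℂ :=
  fun u v => N₁ u.1 v.1 * N₂ u.2 v.2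

/-!
The Kronecker product is monotone on the positive semidefinite cone, because
`B₁ ⊗ B₂ - A₁ ⊗ A₂ = (B₁ - A₁) ⊗ A₂ + B₁ ⊗ (B₂ - A₂)`. The partial trace and `N ↦ N ⊗ I` both
turn tensor products into Kronecker products up to one and the same permutation of the tensor
factors, so the dual constraint of the product system is the Kronecker product of the two given
constraints, conjugated by that permutation.
-/

section Kronecker

open scoped Kronecker MatrixOrder

variable {R 𝕜 l m n p q r m' n' : Type*}

theorem kronecker_sub [NonUnitalNonAssocRing R] (A : Matrix l m R) (B C : Matrix n p R) :
    A ⊗ₖ (B - C) = A ⊗ₖ B - A ⊗ₖ C := by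
  ext
  exact mul_sub _ _ _

theorem sub_kronecker [NonUnitalNonAssocRing R] (A B : Matrix l m R) (C : Matrix n p R) :
    (A - B) ⊗ₖ C = A ⊗ₖ C - B ⊗ₖ C := by
  ext
  exact sub_mul _ _ _

theorem kronecker_kronecker_kronecker_comm [CommSemigroup R] (A : Matrix l m R)
    (B : Matrix n p R) (C : Matrix q r R) (D : Matrix m' n' R) :
    (A ⊗ₖ B) ⊗ₖ (C ⊗ₖ D) =
      ((A ⊗ₖ C) ⊗ₖ (B ⊗ₖ D)).submatrix
        (Equiv.prodProdProdComm l n q m') (Equiv.prodProdProdComm m p r n') := by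
  ext
  exact mul_mul_mul_comm _ _ _ _

theorem isHermitian_kronecker [CommMagma R] [StarMul R] {A : Matrix m m R} {B : Matrix n n R}
    (hA : A.IsHermitian) (hB : B.IsHermitian) : (A ⊗ₖ B).IsHermitian := by
  rw [IsHermitian, conjTranspose_kronecker, hA.eq, hB.eq]

variable [RCLike 𝕜] [Finite m] [Finite n]

theorem kronecker_le_kronecker_of_nonneg_left {A : Matrix m m 𝕜} {B C : Matrix n n 𝕜}
    (h : B ≤ C) (hA : 0 ≤ A) : A ⊗ₖ B ≤ A ⊗ₖ C := by
  rw [le_iff, ← kronecker_sub]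
  exact hA.posSemidef.kronecker h

theorem kronecker_le_kronecker_of_nonneg_right {A B : Matrix m m 𝕜} {C : Matrix n n 𝕜}
    (h : A ≤ B) (hC : 0 ≤ C) : A ⊗ₖ C ≤ B ⊗ₖ C := by
  rw [le_iff, ← sub_kronecker]
  exact PosSemidef.kronecker h hC.posSemidef

theorem kronecker_le_kronecker {A₁ B₁ : Matrix m m 𝕜} {A₂ B₂ : Matrix n n 𝕜}
    (h₁ : A₁ ≤ B₁) (h₂ : A₂ ≤ B₂) (hA₂ : 0 ≤ A₂) (hB₁ : 0 ≤ B₁) :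
    A₁ ⊗ₖ A₂ ≤ B₁ ⊗ₖ B₂ :=
  calc
    A₁ ⊗ₖ A₂ ≤ B₁ ⊗ₖ A₂ := kronecker_le_kronecker_of_nonneg_right h₁ hA₂
    _ ≤ B₁ ⊗ₖ B₂ := kronecker_le_kronecker_of_nonneg_left h₂ hB₁

end Kronecker

section LoewnerOrder

open scoped Kronecker MatrixOrder

variable {m n : Type*} [Fintype m] [Fintype n]

theorem loewnerLE_iff_le {M N : Matrix n n ℂ} : LoewnerLE M N ↔ M ≤ N :=
  Iff.rfl

theorem LoewnerLE.submatrix {M N : Matrix n n ℂ} (h : LoewnerLE M N) (f : m → n) :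
    LoewnerLE (M.submatrix f f) (N.submatrix f f) :=
  PosSemidef.submatrix h f

theorem LoewnerLE.kronecker {A₁ B₁ : Matrix m m ℂ} {A₂ B₂ : Matrix n n ℂ}
    (h₁ : LoewnerLE A₁ B₁) (h₂ : LoewnerLE A₂ B₂) (hA₁ : A₁.PosSemidef) (hA₂ : A₂.PosSemidef) :
    LoewnerLE (A₁ ⊗ₖ A₂) (B₁ ⊗ₖ B₂) := by
  rw [loewnerLE_iff_le] at h₁ h₂ ⊢
  exact kronecker_le_kronecker h₁ h₂ hA₂.nonneg (hA₁.nonneg.trans h₁)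

end LoewnerOrder

section PartialTrace

open scoped Kronecker

variable {S T U S' T' : Type*} [Fintype S] [Fintype S']

theorem trInp_eq_sum_submatrix (M : Matrix (S × T) (S × T) ℂ) :
    trInp M = ∑ s, M.submatrix (Prod.mk s) (Prod.mk s) := by
  ext
  simp only [trInp, Matrix.sum_apply, submatrix_apply]

theorem posSemidef_trInp {M : Matrix (S × T) (S × T) ℂ} (hM : M.PosSemidef) :
    (trInp M).PosSemidef := by
  rw [trInp_eq_sum_submatrix]
  exact posSemidef_sum _ fun s _ ↦ hM.submatrix (Prod.mk s)

theorem trInp_submatrix_map_id (M : Matrix (S × T) (S × T) ℂ) (f : U → T) :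
    trInp (M.submatrix (Prod.map id f) (Prod.map id f)) = (trInp M).submatrix f f :=
  rfl

theorem trInp_kronecker (M : Matrix (S × T) (S × T) ℂ) (M' : Matrix (S' × T') (S' × T') ℂ) :
    trInp ((M ⊗ₖ M').submatrix
        (Equiv.prodProdProdComm S S' T T') (Equiv.prodProdProdComm S S' T T')) =
      trInp M ⊗ₖ trInp M' := by
  ext
  simp only [trInp, submatrix_apply, Equiv.prodProdProdComm_apply, kroneckerMap_apply,
    Fintype.sum_prod_type, Finset.sum_mul_sum]

end PartialTrace

section ProductSystem

open scoped Kronecker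

variable {A₀ B₀ B₁ A₀' B₀' B₁' : Type*}

theorem kronPlain_eq_kronecker (N₁ : Matrix B₀ B₀ ℂ) (N₂ : Matrix B₀' B₀' ℂ) :
    kronPlain N₁ N₂ = N₁ ⊗ₖ N₂ :=
  rfl

theorem tensIdSnd_eq_kronecker_one [DecidableEq B₁] (N : Matrix B₀ B₀ ℂ) :
    (tensIdSnd N : Matrix (B₀ × B₁) (B₀ × B₁) ℂ) = N ⊗ₖ (1 : Matrix B₁ B₁ ℂ) := by
  ext
  simp only [tensIdSnd, kroneckerMap_apply, one_apply]

theorem tensIdSnd_kronPlain [DecidableEq B₁] [DecidableEq B₁']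
    (N₁ : Matrix B₀ B₀ ℂ) (N₂ : Matrix B₀' B₀' ℂ) :
    tensIdSnd (kronPlain N₁ N₂) =
      (tensIdSnd N₁ ⊗ₖ tensIdSnd N₂).submatrix
        (Equiv.prodProdProdComm B₀ B₀' B₁ B₁') (Equiv.prodProdProdComm B₀ B₀' B₁ B₁') := by
  simp only [tensIdSnd_eq_kronecker_one, kronPlain_eq_kronecker]
  rw [← one_kronecker_one, kronecker_kronecker_kronecker_comm]

theorem kron3_eq_submatrix_kronecker (M₁ : Matrix (A₀ × B₀ × B₁) (A₀ × B₀ × B₁) ℂ)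
    (M₂ : Matrix (A₀' × B₀' × B₁') (A₀' × B₀' × B₁') ℂ) :
    kron3 M₁ M₂ =
      ((M₁ ⊗ₖ M₂).submatrix
          (Equiv.prodProdProdComm A₀ A₀' (B₀ × B₁) (B₀' × B₁'))
          (Equiv.prodProdProdComm A₀ A₀' (B₀ × B₁) (B₀' × B₁'))).submatrix
        (Prod.map id (Equiv.prodProdProdComm B₀ B₀' B₁ B₁'))
        (Prod.map id (Equiv.prodProdProdComm B₀ B₀' B₁ B₁')) :=
  rfl

theorem posSemidef_kron3 [Finite A₀] [Finite B₀] [Finite B₁] [Finite A₀'] [Finite B₀'] [Finite B₁']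
    {M₁ : Matrix (A₀ × B₀ × B₁) (A₀ × B₀ × B₁) ℂ}
    {M₂ : Matrix (A₀' × B₀' × B₁') (A₀' × B₀' × B₁') ℂ}
    (hM₁ : M₁.PosSemidef) (hM₂ : M₂.PosSemidef) : (kron3 M₁ M₂).PosSemidef := by
  rw [kron3_eq_submatrix_kronecker]
  exact ((hM₁.kronecker hM₂).submatrix _).submatrix _

theorem trInp_kron3 [Fintype A₀] [Fintype A₀'] (M₁ : Matrix (A₀ × B₀ × B₁) (A₀ × B₀ × B₁) ℂ)
    (M₂ : Matrix (A₀' × B₀' × B₁') (A₀' × B₀' × B₁') ℂ) :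
    trInp (kron3 M₁ M₂) =
      (trInp M₁ ⊗ₖ trInp M₂).submatrix
        (Equiv.prodProdProdComm B₀ B₀' B₁ B₁') (Equiv.prodProdProdComm B₀ B₀' B₁ B₁') := by
  rw [kron3_eq_submatrix_kronecker, trInp_submatrix_map_id, trInp_kronecker]

end ProductSystem

/-- Tensor products of dual feasible solutions for the bipartite conditional min-entropy
SDP are feasible: if `(M₁, N₁)` and `(M₂, N₂)` are dual feasible, then
`(M₁ ⊠ M₂, N₁ ⊗ N₂)` is dual feasible for the tensor-product channel. -/
theorem mu_dual_feasible_tensor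
    {A₀ B₀ B₁ A₀' B₀' B₁' : Type*}
    [Fintype A₀] [Fintype B₀] [Fintype B₁] [Fintype A₀'] [Fintype B₀'] [Fintype B₁']
    [DecidableEq A₀] [DecidableEq B₀] [DecidableEq B₁]
    [DecidableEq A₀'] [DecidableEq B₀'] [DecidableEq B₁']
    [Nonempty A₀] [Nonempty B₀] [Nonempty B₁] [Nonempty A₀'] [Nonempty B₀'] [Nonempty B₁']
    (M₁ : Matrix (A₀ × B₀ × B₁) (A₀ × B₀ × B₁) ℂ) (N₁ : Matrix B₀ B₀ ℂ)
    (M₂ : Matrix (A₀' × B₀' × B₁') (A₀' × B₀' × B₁') ℂ) (N₂ : Matrix B₀' B₀' ℂ)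
    (hM₁ : M₁.PosSemidef) (hN₁₁ : N₁.IsHermitian) (hN₁₂ : Matrix.trace N₁ = 1)
    (hd₁ : LoewnerLE (trInp M₁) (tensIdSnd N₁))
    (hM₂ : M₂.PosSemidef) (hN₂₁ : N₂.IsHermitian) (hN₂₂ : Matrix.trace N₂ = 1)
    (hd₂ : LoewnerLE (trInp M₂) (tensIdSnd N₂)) :
    (kron3 M₁ M₂).PosSemidef ∧
    (kronPlain N₁ N₂).IsHermitian ∧
    Matrix.trace (kronPlain N₁ N₂) = 1 ∧
    LoewnerLE (trInp (kron3 M₁ M₂)) (tensIdSnd (kronPlain N₁ N₂)) := by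
  refine ⟨posSemidef_kron3 hM₁ hM₂, isHermitian_kronecker hN₁₁ hN₂₁, ?_, ?_⟩
  · rw [kronPlain_eq_kronecker, trace_kronecker, hN₁₂, hN₂₂, one_mul]
  · rw [trInp_kron3, tensIdSnd_kronPlain]
    exact (hd₁.kronecker hd₂ (posSemidef_trInp hM₁) (posSemidef_trInp hM₂)).submatrix _
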